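/- Let γ₃ = [[i,−i],[0,−i]] ∈ SL(2,ℤ[i]). A matrix M ∈ SL(2,ℤ[i]) satisfies M·γ₃·M⁻¹ = γ₃ or M·γ₃·M⁻¹ = −γ₃ if and only if M belongs to the eight-element set {±Id, ±γ₃, ±[[1,−1],[2,−1]], ±[[i,0],[2i,−i]]}. (Equivalently, the centralizer of γ₃ in SL(2,ℤ[i])/{±Id} is the four-element group with representatives Id, γ₃, [[1,−1],[2,−1]], [[i,0],[2i,−i]].) -/

import Mathlib

/-!
Writing `M = [[a, b], [c, d]]`, the relation `M γ₃ M⁻¹ = ± γ₃` is the linear system `M γ₃ = ± γ₃ M`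
(`conj_iff_comm`, `conj_iff_anticomm`). With the sign `+` it says `c = 0` and `d = a + 2b`; with the
sign `-` it says `c = 2a` and `d = -a`. In both cases `det M = 1` becomes `a (a + 2b) = ± 1`, so `a`
is one of the four units `±1, ±i` of `ℤ[i]` (`unit_cases`), and `a` then determines `b`.
The sign `+` yields `±Id, ±γ₃`, the sign `-` yields `±W₁, ±W₂`.
-/

/-- `SL(2, ℤ[i])`, the special linear group over the Gaussian integers. -/
abbrev SL2Zi : Type := Matrix.SpecialLinearGroup (Fin 2) GaussianInt

/-- The imaginary unit `i` in the Gaussian integers `ℤ[i]`. -/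
def gi : GaussianInt := ⟨0, 1⟩

/-- Build an element of `SL(2, ℤ[i])` from its four entries and a determinant condition. -/
def Mk (a b c d : GaussianInt) (h : a * d - b * c = 1) : SL2Zi :=
  ⟨!![a, b; c, d], by simpa [Matrix.det_fin_two_of] using h⟩

/-- `γ₃ = [[i, -i], [0, -i]]` in `SL(2, ℤ[i])`. -/
def γ₃ : SL2Zi := Mk gi (-gi) 0 (-gi) (by decide)

/-- `[[1, -1], [2, -1]]` in `SL(2, ℤ[i])`. -/
def W₁ : SL2Zi := Mk 1 (-1) 2 (-1) (by decide)

/-- `[[i, 0], [2i, -i]]` in `SL(2, ℤ[i])`. -/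
def W₂ : SL2Zi := Mk gi 0 (2 * gi) (-gi) (by decide)

/-- A unit of `ℤ[i]` has norm `1`, which bounds its real and imaginary parts by `1` in absolute
value. -/
lemma unit_cases {a e : GaussianInt} (h : a * e = 1) :
    a = 1 ∨ a = -1 ∨ a = gi ∨ a = -gi := by
  have hn : a.norm.natAbs = 1 := Zsqrtd.norm_eq_one_iff.mpr (IsUnit.of_mul_eq_one e h)
  have h1 : a.norm = 1 := by
    have := GaussianInt.norm_nonneg a
    omega
  rw [Zsqrtd.norm_def] at h1
  obtain ⟨x, y⟩ := a
  simp only at h1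
  have hx : -1 ≤ x ∧ x ≤ 1 := by constructor <;> nlinarith [sq_nonneg x, sq_nonneg y]
  have hy : -1 ≤ y ∧ y ≤ 1 := by constructor <;> nlinarith [sq_nonneg x, sq_nonneg y]
  obtain ⟨hx1, hx2⟩ := hx
  obtain ⟨hy1, hy2⟩ := hy
  interval_cases x <;> interval_cases y <;> first | omega | decide

lemma gi_mul_gi : gi * gi = -1 := by decide

lemma gi_ne_zero : gi ≠ 0 := by decide

lemma sl_ext_iff {A B : SL2Zi} :
    A = B ↔ (A : Matrix (Fin 2) (Fin 2) GaussianInt) = (B : Matrix (Fin 2) (Fin 2) GaussianInt) :=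
  Subtype.ext_iff

lemma coe_γ₃ : (γ₃ : Matrix (Fin 2) (Fin 2) GaussianInt) = !![gi, -gi; 0, -gi] := rfl

lemma coe_W₁ : (W₁ : Matrix (Fin 2) (Fin 2) GaussianInt) = !![1, -1; 2, -1] := rfl

lemma coe_W₂ : (W₂ : Matrix (Fin 2) (Fin 2) GaussianInt) = !![gi, 0; 2 * gi, -gi] := rfl

lemma conj_iff_comm (M : SL2Zi) :
    M * γ₃ * M⁻¹ = γ₃ ↔ M 1 0 = 0 ∧ M 1 1 = M 0 0 + 2 * M 0 1 := by
  rw [mul_inv_eq_iff_eq_mul, sl_ext_iff, ← Matrix.ext_iff]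
  simp only [Matrix.SpecialLinearGroup.coe_mul, Matrix.mul_apply, Fin.sum_univ_two, Fin.forall_fin_two,
    coe_γ₃, Matrix.of_apply, Matrix.cons_val', Matrix.cons_val_zero, Matrix.cons_val_one,
    Matrix.cons_val_fin_one]
  constructor
  · rintro ⟨⟨h1, h2⟩, -, -⟩
    constructor
    · exact mul_left_cancel₀ gi_ne_zero (by linear_combination h1)
    · exact mul_left_cancel₀ gi_ne_zero (by linear_combination h2)
  · rintro ⟨h1, h2⟩
    rw [h1, h2]
    refine ⟨⟨?_, ?_⟩, ?_, ?_⟩ <;> ring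

lemma conj_iff_anticomm (M : SL2Zi) :
    (↑(M * γ₃ * M⁻¹) : Matrix (Fin 2) (Fin 2) GaussianInt)
        = -(↑γ₃ : Matrix (Fin 2) (Fin 2) GaussianInt) ↔
      M 1 0 = 2 * M 0 0 ∧ M 1 1 = -M 0 0 := by
  rw [← Matrix.SpecialLinearGroup.coe_neg, ← sl_ext_iff, mul_inv_eq_iff_eq_mul,
    sl_ext_iff, ← Matrix.ext_iff]
  simp only [Matrix.SpecialLinearGroup.coe_mul, Matrix.SpecialLinearGroup.coe_neg, Matrix.neg_apply,
    Matrix.mul_apply, Fin.sum_univ_two, Fin.forall_fin_two,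
    coe_γ₃, Matrix.of_apply, Matrix.cons_val', Matrix.cons_val_zero, Matrix.cons_val_one,
    Matrix.cons_val_fin_one]
  constructor
  · rintro ⟨⟨h1, h2⟩, -, -⟩
    constructor
    · exact mul_left_cancel₀ gi_ne_zero (by linear_combination -h1)
    · exact mul_left_cancel₀ gi_ne_zero (by linear_combination -h2)
  · rintro ⟨h1, h2⟩
    rw [h1, h2]
    refine ⟨⟨?_, ?_⟩, ?_, ?_⟩ <;> ring

/-- A matrix `M ∈ SL(2,ℤ[i])` satisfies `Mγ₃M⁻¹ = ±γ₃` for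
`γ₃ = [[i,-i],[0,-i]]` if and only if `M` is one of the eight elements
`±Id, ±γ₃, ±[[1,-1],[2,-1]], ±[[i,0],[2i,-i]]`; i.e. the centralizer of `γ₃` in
`SL(2,ℤ[i])/{±Id}` is the four-element group `{Id, γ₃, [[1,-1],[2,-1]], [[i,0],[2i,-i]]}`. -/
theorem statement5 (M : SL2Zi) :
    (M * γ₃ * M⁻¹ = γ₃ ∨
      (↑(M * γ₃ * M⁻¹) : Matrix (Fin 2) (Fin 2) GaussianInt)
        = -(↑γ₃ : Matrix (Fin 2) (Fin 2) GaussianInt)) ↔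
    (M = 1 ∨ (↑M : Matrix (Fin 2) (Fin 2) GaussianInt) = -(1 : Matrix (Fin 2) (Fin 2) GaussianInt) ∨
     M = γ₃ ∨ (↑M : Matrix (Fin 2) (Fin 2) GaussianInt) = -(↑γ₃ : Matrix (Fin 2) (Fin 2) GaussianInt) ∨
     M = W₁ ∨ (↑M : Matrix (Fin 2) (Fin 2) GaussianInt) = -(↑W₁ : Matrix (Fin 2) (Fin 2) GaussianInt) ∨
     M = W₂ ∨ (↑M : Matrix (Fin 2) (Fin 2) GaussianInt) = -(↑W₂ : Matrix (Fin 2) (Fin 2) GaussianInt)) := by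
  rw [conj_iff_comm, conj_iff_anticomm]
  have hdet := M.det_coe
  rw [Matrix.det_fin_two] at hdet
  have two_ne : (2 : GaussianInt) ≠ 0 := two_ne_zero
  have hi := gi_mul_gi
  -- Both sides become conditions on the four entries of `M`.
  simp only [sl_ext_iff, ← Matrix.ext_iff, Fin.forall_fin_two, coe_γ₃, coe_W₁, coe_W₂,
    Matrix.SpecialLinearGroup.coe_one, Matrix.neg_apply, Matrix.of_apply, Matrix.cons_val',
    Matrix.cons_val_zero, Matrix.cons_val_one, Matrix.cons_val_fin_one, Matrix.one_apply,
    neg_zero, neg_neg, if_true, zero_ne_one, one_ne_zero, if_false]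
  generalize M.val 0 0 = a at *
  generalize M.val 0 1 = b at *
  generalize M.val 1 0 = c at *
  generalize M.val 1 1 = d at *
  constructor
  -- `hdet` reads `a (a + 2b) = ± 1`. For `a = ±i` it is multiplied by the inverse of `a`, up to sign,
  -- and `gi * gi = -1` isolates `2b`; the factor `2` cancels because `ℤ[i]` is a domain.
  · rintro (⟨rfl, rfl⟩ | ⟨rfl, rfl⟩)
    · obtain rfl | rfl | rfl | rfl := unit_cases (a := a) (e := a + 2 * b)
        (by linear_combination hdet)
      · have hb : b = 0 := mul_left_cancel₀ two_ne (by linear_combination hdet)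
        subst hb; simp
      · have hb : b = 0 := mul_left_cancel₀ two_ne (by linear_combination -hdet)
        subst hb; simp
      · have hb : b = -gi := mul_left_cancel₀ two_ne
          (by linear_combination -gi * hdet + (2 * b + gi) * hi)
        subst hb
        right; right; left
        refine ⟨⟨rfl, rfl⟩, rfl, by ring⟩
      · have hb : b = gi := mul_left_cancel₀ two_ne
          (by linear_combination gi * hdet + (2 * b - gi) * hi)
        subst hb
        right; right; right; left
        refine ⟨⟨rfl, rfl⟩, rfl, by ring⟩
    · obtain rfl | rfl | rfl | rfl := unit_cases (a := a) (e := -(a + 2 * b))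
        (by linear_combination hdet)
      · have hb : b = -1 := mul_left_cancel₀ two_ne (by linear_combination -hdet)
        subst hb; simp
      · have hb : b = 1 := mul_left_cancel₀ two_ne (by linear_combination hdet)
        subst hb; simp
      · have hb : b = 0 := mul_left_cancel₀ two_ne
          (by linear_combination gi * hdet + (2 * b + gi) * hi)
        subst hb; simp
      · have hb : b = 0 := mul_left_cancel₀ two_ne
          (by linear_combination -gi * hdet + (2 * b - gi) * hi)
        subst hb; simp
  · rintro (h | h | h | h | h | h | h | h) <;> obtain ⟨⟨rfl, rfl⟩, rfl, rfl⟩ := h <;>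
      first
      | (left; constructor <;> ring1)
      | (right; constructor <;> ring1)
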